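/- arXiv:1310.1615 — 2 statements merged into one kernel-verified Lean document; each statement's English description precedes it below -/
import Mathlib

section
/- For every ε > 0 there exists n ∈ ℕ with √2/2ⁿ < ε such that the baker's system, observed via the function Φ that maps each point of the dyadic square grid cell [k/2ⁿ, (k+1)/2ⁿ) × [l/2ⁿ, (l+1)/2ⁿ) to the cell's center, yields a stationary stochastic process {Φ(Tᵗ); t ∈ ℤ} satisfying d(m, Φ(m)) ≤ √2/2ⁿ < ε for all m ∈ M; moreover this process has the Markov property: for the partition into the 2^{2n} grid cells, the conditional distribution of the next cell given the current cell and any finite past equals the conditional distribution given the current cell alone. -/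
open MeasureTheory Set
open scoped ENNReal

def bakerGamma : Set (ℝ × ℝ) :=
  {p | (∃ n j : ℕ, j ≤ 2 ^ n ∧ p.1 = (j : ℝ) / 2 ^ n) ∨
       (∃ n j : ℕ, j ≤ 2 ^ n ∧ p.2 = (j : ℝ) / 2 ^ n)}

def bakerM : Set (ℝ × ℝ) := (Icc (0:ℝ) 1 ×ˢ Icc (0:ℝ) 1) \ bakerGamma

noncomputable def bakerT (p : ℝ × ℝ) : ℝ × ℝ :=
  if p.1 < 1 / 2 then (2 * p.1, p.2 / 2) else (2 * p.1 - 1, (p.2 + 1) / 2)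

/-- The observation function mapping each dyadic grid cell of side `1/2^n`
to the centre of that cell. -/
noncomputable def gridObs (n : ℕ) (p : ℝ × ℝ) : ℝ × ℝ :=
  (((⌊(2 ^ n : ℝ) * p.1⌋ : ℝ) + 1 / 2) / 2 ^ n, ((⌊(2 ^ n : ℝ) * p.2⌋ : ℝ) + 1 / 2) / 2 ^ n)


/-- Nondyadic points of the unit interval. -/
def bakN : Set ℝ := {x | (0 ≤ x ∧ x ≤ 1) ∧ ¬ ∃ n j : ℕ, j ≤ 2 ^ n ∧ x = (j : ℝ) / 2 ^ n}

theorem mem_bakerM (p : ℝ × ℝ) : p ∈ bakerM ↔ p.1 ∈ bakN ∧ p.2 ∈ bakN := by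
  simp only [bakerM, bakerGamma, bakN, mem_diff, mem_prod, mem_Icc, mem_setOf_eq, not_or]
  tauto

theorem bakN_pos {x : ℝ} (h : x ∈ bakN) : 0 < x := by
  refine lt_of_le_of_ne h.1.1 fun h0 => h.2 ⟨0, 0, by simp, by simp [← h0]⟩

theorem bakN_lt {x : ℝ} (h : x ∈ bakN) : x < 1 := by
  refine lt_of_le_of_ne h.1.2 fun h0 => h.2 ⟨0, 1, by simp, by simp [h0]⟩

theorem bakN_dbl {x : ℝ} (h : x ∈ bakN) (hx : x < 1 / 2) : 2 * x ∈ bakN := by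
  have := bakN_pos h
  refine ⟨⟨by linarith, by linarith⟩, ?_⟩
  rintro ⟨n, j, hj, e⟩
  refine h.2 ⟨n + 1, j, by rw [pow_succ]; omega, ?_⟩
  rw [pow_succ, ← div_div, ← e]; ring

theorem bakN_dbl_sub {x : ℝ} (h : x ∈ bakN) (hx : ¬ x < 1 / 2) : 2 * x - 1 ∈ bakN := by
  have := bakN_lt h
  refine ⟨⟨by linarith, by linarith⟩, ?_⟩
  rintro ⟨n, j, hj, e⟩
  refine h.2 ⟨n + 1, j + 2 ^ n, by rw [pow_succ]; omega, ?_⟩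
  have h2 : (2 : ℝ) ^ n ≠ 0 := by positivity
  have : x = ((j : ℝ) / 2 ^ n + 1) / 2 := by linarith
  rw [this, pow_succ]; push_cast; field_simp

theorem bakN_half {x : ℝ} (h : x ∈ bakN) : x / 2 ∈ bakN := by
  have := bakN_lt h
  have := bakN_pos h
  refine ⟨⟨by linarith, by linarith⟩, ?_⟩
  rintro ⟨n, j, hj, e⟩
  have h2 : (0 : ℝ) < 2 ^ n := by positivity
  have h3 : x = ((2 * j : ℕ) : ℝ) / 2 ^ n := by push_cast; rw [mul_div_assoc, ← e]; ring
  refine h.2 ⟨n, 2 * j, ?_, h3⟩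
  have : ((2 * j : ℕ) : ℝ) / 2 ^ n ≤ 1 := by rw [← h3]; linarith
  rw [div_le_one h2] at this
  exact_mod_cast this

theorem bakN_half_add {x : ℝ} (h : x ∈ bakN) : (x + 1) / 2 ∈ bakN := by
  have := bakN_lt h
  have := bakN_pos h
  refine ⟨⟨by linarith, by linarith⟩, ?_⟩
  rintro ⟨n, j, hj, e⟩
  have h2 : (0 : ℝ) < 2 ^ n := by positivity
  have h3 : x = (2 * (j : ℝ) - 2 ^ n) / 2 ^ n := by
    rw [sub_div, mul_div_assoc, ← e, div_self h2.ne']; ring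
  have h4 : 2 ^ n ≤ 2 * j := by
    have : 0 ≤ (2 * (j : ℝ) - 2 ^ n) / 2 ^ n := by rw [← h3]; linarith
    rw [le_div_iff₀ h2] at this
    have : (2 : ℝ) ^ n ≤ 2 * j := by linarith
    exact_mod_cast this
  refine h.2 ⟨n, 2 * j - 2 ^ n, by omega, ?_⟩
  rw [h3, Nat.cast_sub h4]; push_cast; rfl

theorem meas_bakN : MeasurableSet bakN := by
  have hc : Set.Countable {x : ℝ | ∃ n j : ℕ, j ≤ 2 ^ n ∧ x = (j : ℝ) / 2 ^ n} := by
    refine (Set.countable_range (fun q : ℕ × ℕ => (q.2 : ℝ) / 2 ^ q.1)).mono ?_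
    rintro x ⟨n, j, _, rfl⟩
    exact ⟨(n, j), rfl⟩
  have : bakN = Icc 0 1 \ {x : ℝ | ∃ n j : ℕ, j ≤ 2 ^ n ∧ x = (j : ℝ) / 2 ^ n} := by
    ext x; simp [bakN]
  rw [this]
  exact measurableSet_Icc.diff hc.measurableSet

theorem meas_bakerM : MeasurableSet bakerM := by
  have : bakerM = bakN ×ˢ bakN := by ext p; simp [mem_bakerM]
  rw [this]; exact meas_bakN.prod meas_bakN

noncomputable def bakU (p : ℝ × ℝ) : ℝ × ℝ :=
  if p.2 < 1 / 2 then (p.1 / 2, 2 * p.2) else ((p.1 + 1) / 2, 2 * p.2 - 1)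

theorem bakT_mem {p : ℝ × ℝ} (h : p ∈ bakerM) : bakerT p ∈ bakerM := by
  rw [mem_bakerM] at *
  unfold bakerT
  split_ifs with hx
  · exact ⟨bakN_dbl h.1 hx, bakN_half h.2⟩
  · exact ⟨bakN_dbl_sub h.1 hx, bakN_half_add h.2⟩

theorem bakU_mem {p : ℝ × ℝ} (h : p ∈ bakerM) : bakU p ∈ bakerM := by
  rw [mem_bakerM] at *
  unfold bakU
  split_ifs with hx
  · exact ⟨bakN_half h.1, bakN_dbl h.2 hx⟩
  · exact ⟨bakN_half_add h.1, bakN_dbl_sub h.2 hx⟩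

theorem bakU_bakT {p : ℝ × ℝ} (h : p ∈ bakerM) : bakU (bakerT p) = p := by
  rw [mem_bakerM] at h
  have h1 := bakN_lt h.2
  have h2 := bakN_pos h.2
  unfold bakerT bakU
  by_cases hx : p.1 < 1 / 2
  · rw [if_pos hx, if_pos (by show p.2 / 2 < 1 / 2; linarith)]
    ext <;> simp <;> ring
  · rw [if_neg hx, if_neg (by show ¬ (p.2 + 1) / 2 < 1 / 2; linarith)]
    ext <;> simp <;> ring

theorem bakT_bakU {p : ℝ × ℝ} (h : p ∈ bakerM) : bakerT (bakU p) = p := by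
  rw [mem_bakerM] at h
  have h1 := bakN_lt h.1
  have h2 := bakN_pos h.1
  unfold bakerT bakU
  by_cases hx : p.2 < 1 / 2
  · rw [if_pos hx, if_pos (by show p.1 / 2 < 1 / 2; linarith)]
    ext <;> simp <;> ring
  · rw [if_neg hx, if_neg (by show ¬ (p.1 + 1) / 2 < 1 / 2; linarith)]
    ext <;> simp <;> ring

open Classical in
/-- The baker's map as a permutation of the plane, the identity off `bakerM`. -/
noncomputable def bakE : Equiv.Perm (ℝ × ℝ) where
  toFun p := if p ∈ bakerM then bakerT p else p
  invFun p := if p ∈ bakerM then bakU p else p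
  left_inv p := by
    by_cases h : p ∈ bakerM
    · simp [h, bakT_mem h, bakU_bakT h]
    · simp [h]
  right_inv p := by
    by_cases h : p ∈ bakerM
    · simp [h, bakU_mem h, bakT_bakU h]
    · simp [h]

theorem bakE_apply {p : ℝ × ℝ} (h : p ∈ bakerM) : bakE p = bakerT p := if_pos h

theorem bakE_symm_apply {p : ℝ × ℝ} (h : p ∈ bakerM) : bakE.symm p = bakU p := if_pos h

theorem bakE_mem (p : ℝ × ℝ) : bakE p ∈ bakerM ↔ p ∈ bakerM := by
  by_cases h : p ∈ bakerM
  · simp [bakE_apply h, bakT_mem h, h]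
  · have : bakE p = p := if_neg h
    rw [this]

theorem meas_bakT : Measurable bakerT := by
  unfold bakerT
  refine Measurable.ite (measurableSet_lt measurable_fst measurable_const) ?_ ?_ <;> fun_prop

theorem meas_bakU : Measurable bakU := by
  unfold bakU
  refine Measurable.ite (measurableSet_lt measurable_snd measurable_const) ?_ ?_ <;> fun_prop

noncomputable def bakEm : (ℝ × ℝ) ≃ᵐ (ℝ × ℝ) where
  toEquiv := bakE
  measurable_toFun := Measurable.ite meas_bakerM meas_bakT measurable_id
  measurable_invFun := Measurable.ite meas_bakerM meas_bakU measurable_id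

theorem mp_L0 : MeasurePreserving (fun p : ℝ × ℝ => (2 * p.1, p.2 / 2)) := by
  refine ⟨by fun_prop, ?_⟩
  have h : (fun p : ℝ × ℝ => (2 * p.1, p.2 / 2)) = Prod.map (fun x => 2 * x) (fun x => 2⁻¹ * x) := by
    ext p <;> simp; ring
  rw [h, Measure.volume_eq_prod, ← Measure.map_prod_map _ _ (by fun_prop) (by fun_prop),
    Real.map_volume_mul_left (by norm_num), Real.map_volume_mul_left (by norm_num),
    Measure.prod_smul_right, Measure.prod_smul_left, smul_smul, ← ENNReal.ofReal_mul (by positivity)]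
  norm_num

theorem mp_L1 : MeasurePreserving (fun p : ℝ × ℝ => (2 * p.1 - 1, (p.2 + 1) / 2)) := by
  have h := (measurePreserving_add_right (volume : Measure (ℝ × ℝ)) (-1, 1 / 2)).comp mp_L0
  have e : (fun p : ℝ × ℝ => (2 * p.1 - 1, (p.2 + 1) / 2)) =
      (fun x => x + (-1, 1 / 2)) ∘ fun p : ℝ × ℝ => (2 * p.1, p.2 / 2) := by
    funext p
    refine Prod.ext ?_ ?_
    · simp only [Function.comp, Prod.fst_add]; ring
    · simp only [Function.comp, Prod.snd_add]; ring
  rw [e]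
  exact h

theorem mp_bakE : MeasurePreserving bakEm (volume.restrict bakerM) (volume.restrict bakerM) := by
  refine ⟨bakEm.measurable, ?_⟩
  ext A hA
  rw [Measure.map_apply bakEm.measurable hA, Measure.restrict_apply (bakEm.measurable hA),
    Measure.restrict_apply hA]
  have hlo : MeasurableSet {p : ℝ × ℝ | p.2 < 1 / 2} := measurableSet_lt measurable_snd measurable_const
  have hx : MeasurableSet {p : ℝ × ℝ | p.1 < 1 / 2} := measurableSet_lt measurable_fst measurable_const
  have hAM := hA.inter meas_bakerM
  rw [← measure_inter_add_diff (A ∩ bakerM) hlo,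
    ← measure_inter_add_diff (bakEm ⁻¹' A ∩ bakerM) hx,
    ← mp_L0.measure_preimage (hAM.inter hlo).nullMeasurableSet,
    ← mp_L1.measure_preimage (hAM.diff hlo).nullMeasurableSet]
  congr 2
  · ext p
    simp only [mem_inter_iff, mem_preimage, mem_setOf_eq]
    constructor
    · rintro ⟨⟨h1, h2⟩, h3⟩
      have e : bakEm p = (2 * p.1, p.2 / 2) := by
        change bakE p = _
        rw [bakE_apply h2, bakerT, if_pos h3]
      have := (bakE_mem p).2 h2
      change bakEm p ∈ _ at this
      rw [e] at h1 this
      have := bakN_lt ((mem_bakerM p).1 h2).2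
      exact ⟨⟨h1, by assumption⟩, by linarith⟩
    · rintro ⟨⟨h1, h2⟩, h3⟩
      have hb := bakE_symm_apply h2
      have e : bakU (2 * p.1, p.2 / 2) = p := by
        rw [bakU, if_pos h3]; ext <;> simp <;> ring
      rw [e, Equiv.symm_apply_eq] at hb
      have hm : p ∈ bakerM := by rw [← e]; exact bakU_mem h2
      refine ⟨⟨?_, hm⟩, ?_⟩
      · change bakE p ∈ A
        rw [← hb]; exact h1
      · have := bakN_lt ((mem_bakerM _).1 h2).1
        simp only at this
        linarith
  · ext p
    simp only [mem_diff, mem_inter_iff, mem_preimage, mem_setOf_eq]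
    constructor
    · rintro ⟨⟨h1, h2⟩, h3⟩
      have e : bakEm p = (2 * p.1 - 1, (p.2 + 1) / 2) := by
        change bakE p = _
        rw [bakE_apply h2, bakerT, if_neg h3]
      have := (bakE_mem p).2 h2
      change bakEm p ∈ _ at this
      rw [e] at h1 this
      have := bakN_pos ((mem_bakerM p).1 h2).2
      exact ⟨⟨h1, by assumption⟩, by linarith⟩
    · rintro ⟨⟨h1, h2⟩, h3⟩
      have hb := bakE_symm_apply h2
      have e : bakU (2 * p.1 - 1, (p.2 + 1) / 2) = p := by
        rw [bakU, if_neg h3]; ext <;> simp <;> ring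
      rw [e, Equiv.symm_apply_eq] at hb
      have hm : p ∈ bakerM := by rw [← e]; exact bakU_mem h2
      refine ⟨⟨?_, hm⟩, ?_⟩
      · change bakE p ∈ A
        rw [← hb]; exact h1
      · have := bakN_pos ((mem_bakerM _).1 h2).1
        simp only at this
        linarith

theorem mp_zpow (t : ℤ) : MeasurePreserving (⇑(bakE ^ t)) (volume.restrict bakerM)
    (volume.restrict bakerM) := by
  have h1 : MeasurePreserving (⇑bakE) (volume.restrict bakerM) (volume.restrict bakerM) := mp_bakE
  have h2 : MeasurePreserving (⇑bakE⁻¹) (volume.restrict bakerM) (volume.restrict bakerM) :=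
    mp_bakE.symm bakEm
  induction t using Int.induction_on with
  | zero => simpa using MeasurePreserving.id _
  | succ i ih => rw [zpow_add_one]; exact ih.comp h1
  | pred i ih => rw [zpow_sub_one]; exact ih.comp h2

theorem bakE_zpow_mem (t : ℤ) : ∀ p, (bakE ^ t) p ∈ bakerM ↔ p ∈ bakerM := by
  induction t using Int.induction_on with
  | zero => simp
  | succ i ih => intro p; rw [zpow_add_one, Equiv.Perm.mul_apply, ih, bakE_mem]
  | pred i ih =>
    intro p
    rw [zpow_sub_one, Equiv.Perm.mul_apply, ih, ← bakE_mem]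
    simp

theorem meas_gridObs (n : ℕ) : Measurable (gridObs n) := by
  unfold gridObs
  have hc : Measurable (fun z : ℤ => (z : ℝ)) := measurable_of_countable _
  have h1 : Measurable (fun p : ℝ × ℝ => (⌊(2 ^ n : ℝ) * p.1⌋ : ℝ)) :=
    hc.comp (Int.measurable_floor.comp (by fun_prop))
  have h2 : Measurable (fun p : ℝ × ℝ => (⌊(2 ^ n : ℝ) * p.2⌋ : ℝ)) :=
    hc.comp (Int.measurable_floor.comp (by fun_prop))
  exact ((h1.add_const _).div_const _).prodMk ((h2.add_const _).div_const _)

theorem gridObs_eq_iff (n : ℕ) (p q : ℝ × ℝ) : gridObs n p = gridObs n q ↔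
    ⌊(2 ^ n : ℝ) * p.1⌋ = ⌊(2 ^ n : ℝ) * q.1⌋ ∧ ⌊(2 ^ n : ℝ) * p.2⌋ = ⌊(2 ^ n : ℝ) * q.2⌋ := by
  have h2 : (2 : ℝ) ^ n ≠ 0 := by positivity
  simp only [gridObs, Prod.mk.injEq, div_left_inj' h2, add_left_inj, Int.cast_inj]

theorem floor_half (n : ℕ) {x y : ℝ} (h : ⌊(2 ^ n : ℝ) * x⌋ = ⌊(2 ^ n : ℝ) * y⌋) :
    ⌊(2 ^ n : ℝ) * (x / 2)⌋ = ⌊(2 ^ n : ℝ) * (y / 2)⌋ := by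
  have key : ∀ z : ℝ, ⌊(2 ^ n : ℝ) * (z / 2)⌋ = ⌊(2 ^ n : ℝ) * z⌋ / 2 := by
    intro z
    have := Int.floor_div_natCast ((2 ^ n : ℝ) * z) 2
    rw [← mul_div_assoc]
    exact_mod_cast this
  rw [key, key, h]

theorem floor_half_add (n : ℕ) {x y : ℝ} (h : ⌊(2 ^ n : ℝ) * x⌋ = ⌊(2 ^ n : ℝ) * y⌋) :
    ⌊(2 ^ n : ℝ) * ((x + 1) / 2)⌋ = ⌊(2 ^ n : ℝ) * ((y + 1) / 2)⌋ := by
  apply floor_half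
  have key : ∀ z : ℝ, ⌊(2 ^ n : ℝ) * (z + 1)⌋ = ⌊(2 ^ n : ℝ) * z⌋ + 2 ^ n := by
    intro z
    have := Int.floor_add_intCast ((2 ^ n : ℝ) * z) (2 ^ n)
    rw [← this]; push_cast; congr 1; ring
  rw [key, key, h]

theorem past_aux (n : ℕ) (r : ℕ) : ∀ p q : ℝ × ℝ, p ∈ bakerM → q ∈ bakerM → p.2 = q.2 →
    ⌊(2 ^ n : ℝ) * p.1⌋ = ⌊(2 ^ n : ℝ) * q.1⌋ →
    gridObs n ((bakE⁻¹ ^ r) p) = gridObs n ((bakE⁻¹ ^ r) q) := by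
  induction r with
  | zero =>
    intro p q _ _ h1 h2
    simp only [pow_zero, Equiv.Perm.one_apply]
    rw [gridObs_eq_iff]
    exact ⟨h2, by rw [h1]⟩
  | succ r ih =>
    intro p q hp hq h1 h2
    rw [pow_succ, Equiv.Perm.mul_apply, Equiv.Perm.mul_apply]
    have e1 : bakE⁻¹ p = bakU p := bakE_symm_apply hp
    have e2 : bakE⁻¹ q = bakU q := bakE_symm_apply hq
    rw [e1, e2]
    refine ih _ _ (bakU_mem hp) (bakU_mem hq) ?_ ?_
    · unfold bakU; rw [h1]; split_ifs <;> simp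
    · unfold bakU; rw [h1]; split_ifs
      · exact floor_half n h2
      · exact floor_half_add n h2

theorem fut_aux (n : ℕ) (x y y' : ℝ) (h : ⌊(2 ^ n : ℝ) * y⌋ = ⌊(2 ^ n : ℝ) * y'⌋) :
    gridObs n (bakerT (x, y)) = gridObs n (bakerT (x, y')) := by
  rw [gridObs_eq_iff]
  unfold bakerT
  simp only
  split_ifs
  · exact ⟨rfl, floor_half n h⟩
  · exact ⟨rfl, floor_half_add n h⟩

theorem markov_zero (n k : ℕ) (b : Fin k → ℝ × ℝ) (oi oj : ℝ × ℝ)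
    (hpos : 0 < volume.restrict bakerM
      {x | gridObs n x = oi ∧ ∀ r : Fin k, gridObs n ((bakE ^ (-1 - (r : ℤ))) x) = b r}) :
    volume.restrict bakerM
        ({x | gridObs n x = oi ∧ ∀ r : Fin k, gridObs n ((bakE ^ (-1 - (r : ℤ))) x) = b r}
          ∩ {x | gridObs n (bakE x) = oj})
      / volume.restrict bakerM
        {x | gridObs n x = oi ∧ ∀ r : Fin k, gridObs n ((bakE ^ (-1 - (r : ℤ))) x) = b r}
    = volume.restrict bakerM ({x | gridObs n x = oi} ∩ {x | gridObs n (bakE x) = oj})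
      / volume.restrict bakerM {x | gridObs n x = oi} := by
  simp only [Measure.restrict_apply' meas_bakerM] at *
  obtain ⟨p0, ⟨hp0, hb0⟩, hM0⟩ := nonempty_of_measure_ne_zero hpos.ne'
  subst hp0
  set X : Set ℝ := {x | x ∈ bakN ∧ ⌊(2 ^ n : ℝ) * x⌋ = ⌊(2 ^ n : ℝ) * p0.1⌋} with hX
  set Y : Set ℝ := {y | y ∈ bakN ∧ ⌊(2 ^ n : ℝ) * y⌋ = ⌊(2 ^ n : ℝ) * p0.2⌋} with hY
  set X' : Set ℝ := {x | x ∈ X ∧ gridObs n (bakerT (x, p0.2)) = oj} with hX'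
  set B : Set ℝ := {y | y ∈ Y ∧ ∀ r : Fin k, gridObs n ((bakE ^ (-1 - (r : ℤ))) (p0.1, y)) = b r}
    with hB
  have hp1 : p0.1 ∈ bakN := ((mem_bakerM _).1 hM0).1
  have past : ∀ x ∈ X, ∀ y ∈ Y, ∀ r : ℕ, gridObs n ((bakE ^ (-1 - (r : ℤ))) (x, y))
      = gridObs n ((bakE ^ (-1 - (r : ℤ))) (p0.1, y)) := by
    intro x hx y hy r
    have e : bakE ^ (-1 - (r : ℤ)) = bakE⁻¹ ^ (r + 1) := by
      rw [inv_pow, ← zpow_natCast, ← zpow_neg]; congr 1; push_cast; ring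
    rw [e]
    exact past_aux n _ _ _ ((mem_bakerM _).2 ⟨hx.1, hy.1⟩) ((mem_bakerM _).2 ⟨hp1, hy.1⟩) rfl hx.2
  have fut : ∀ x ∈ X, ∀ y ∈ Y, gridObs n (bakE (x, y)) = gridObs n (bakerT (x, p0.2)) := by
    intro x hx y hy
    rw [bakE_apply ((mem_bakerM _).2 ⟨hx.1, hy.1⟩)]
    exact fut_aux n _ _ _ hy.2
  have hG : ∀ x y, ((x, y) ∈ bakerM ∧ gridObs n (x, y) = gridObs n p0) ↔ x ∈ X ∧ y ∈ Y := by
    intro x y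
    rw [mem_bakerM, gridObs_eq_iff]
    simp only [hX, hY, mem_setOf_eq]
    tauto
  have e1 : {x | gridObs n x = gridObs n p0} ∩ bakerM = X ×ˢ Y := by
    ext ⟨x, y⟩
    rw [mem_prod, ← hG x y]
    simp only [mem_inter_iff, mem_setOf_eq]
    tauto
  have e2 : {x | gridObs n x = gridObs n p0 ∧
      ∀ r : Fin k, gridObs n ((bakE ^ (-1 - (r : ℤ))) x) = b r} ∩ bakerM = X ×ˢ B := by
    ext ⟨x, y⟩
    simp only [mem_inter_iff, mem_setOf_eq, mem_prod, hB]
    constructor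
    · rintro ⟨⟨h1, h2⟩, h3⟩
      obtain ⟨hx, hy⟩ := (hG x y).1 ⟨h3, h1⟩
      exact ⟨hx, hy, fun r => by rw [← past x hx y hy r]; exact h2 r⟩
    · rintro ⟨hx, hy, h⟩
      obtain ⟨h3, h1⟩ := (hG x y).2 ⟨hx, hy⟩
      exact ⟨⟨h1, fun r => by rw [past x hx y hy r]; exact h r⟩, h3⟩
  have e3 : ∀ C ⊆ Y, (X ×ˢ C) ∩ {x | gridObs n (bakE x) = oj} = X' ×ˢ C := by
    intro C hC
    ext ⟨x, y⟩
    simp only [mem_inter_iff, mem_setOf_eq, mem_prod, hX']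
    constructor
    · rintro ⟨⟨hx, hy⟩, h⟩
      exact ⟨⟨hx, by rw [← fut x hx y (hC hy)]; exact h⟩, hy⟩
    · rintro ⟨⟨hx, h⟩, hy⟩
      exact ⟨⟨hx, hy⟩, by rw [fut x hx y (hC hy)]; exact h⟩
  have hBY : B ⊆ Y := fun y hy => hy.1
  rw [e2, Measure.volume_eq_prod, Measure.prod_prod] at hpos
  have hb0 : volume B ≠ 0 := fun h => by simp [h] at hpos
  have hy0 : volume Y ≠ 0 := fun h => hb0 (measure_mono_null hBY h)
  have hyt : volume Y ≠ ⊤ := by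
    refine ne_top_of_le_ne_top ?_ (measure_mono (show Y ⊆ Icc 0 1 from fun y hy => hy.1.1))
    simp
  have hbt : volume B ≠ ⊤ := ne_top_of_le_ne_top hyt (measure_mono hBY)
  rw [inter_right_comm, e2, inter_right_comm, e1, e3 B hBY, e3 Y le_rfl, Measure.volume_eq_prod]
  simp only [Measure.prod_prod]
  rw [ENNReal.mul_div_mul_right _ _ hb0 hbt, ENNReal.mul_div_mul_right _ _ hy0 hyt]

theorem dist_gridObs (n : ℕ) (m : ℝ × ℝ) : dist m (gridObs n m) ≤ Real.sqrt 2 / 2 ^ n := by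
  have h2 : (0 : ℝ) < 2 ^ n := by positivity
  have hs : (1 : ℝ) ≤ Real.sqrt 2 := by rw [Real.one_le_sqrt]; norm_num
  have key : ∀ x : ℝ, dist x (((⌊(2 ^ n : ℝ) * x⌋ : ℝ) + 1 / 2) / 2 ^ n) ≤ Real.sqrt 2 / 2 ^ n := by
    intro x
    have a := Int.floor_le ((2 ^ n : ℝ) * x)
    have b := Int.lt_floor_add_one ((2 ^ n : ℝ) * x)
    have e : x - ((⌊(2 ^ n : ℝ) * x⌋ : ℝ) + 1 / 2) / 2 ^ n
        = (2 ^ n * x - ((⌊(2 ^ n : ℝ) * x⌋ : ℝ) + 1 / 2)) / 2 ^ n := by field_simp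
    rw [Real.dist_eq, e, abs_div, abs_of_pos h2]
    gcongr
    rw [abs_le]
    constructor <;> linarith
  rw [Prod.dist_eq]
  exact max_le (key _) (key _)

theorem stmt14 :
    ∀ ε : ℝ, 0 < ε → ∃ n : ℕ, Real.sqrt 2 / 2 ^ n < ε ∧
      -- the observation is within √2/2ⁿ < ε of the actual state
      (∀ m ∈ bakerM, dist m (gridObs n m) ≤ Real.sqrt 2 / 2 ^ n) ∧
      -- the ℤ-indexed dynamics extending the baker's map
      ∃ S : ℤ → (ℝ × ℝ → ℝ × ℝ),
        (∀ p ∈ bakerM, S 0 p = p) ∧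
        (∀ p ∈ bakerM, S 1 p = bakerT p) ∧
        (∀ s t : ℤ, ∀ p ∈ bakerM, S (s + t) p = S s (S t p)) ∧
        (∀ t : ℤ, Set.MapsTo (S t) bakerM bakerM) ∧
        -- the observed process Z_t = gridObs n ∘ S t is stationary
        (∀ (k : ℕ) (t : Fin k → ℤ) (h : ℤ) (A : Fin k → Set (ℝ × ℝ)),
          (∀ i, MeasurableSet (A i)) →
          volume.restrict bakerM {x | ∀ i, gridObs n (S (t i + h) x) ∈ A i}
            = volume.restrict bakerM {x | ∀ i, gridObs n (S (t i) x) ∈ A i}) ∧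
        -- the Markov property
        (∀ (t : ℤ) (k : ℕ) (b : Fin k → ℝ × ℝ) (oi oj : ℝ × ℝ),
          0 < volume.restrict bakerM
              {x | gridObs n (S t x) = oi ∧ ∀ r : Fin k, gridObs n (S (t - 1 - r) x) = b r} →
          0 < volume.restrict bakerM {x | gridObs n (S t x) = oi} →
          volume.restrict bakerM
              ({x | gridObs n (S t x) = oi ∧ ∀ r : Fin k, gridObs n (S (t - 1 - r) x) = b r}
                ∩ {x | gridObs n (S (t + 1) x) = oj})
            / volume.restrict bakerM
              {x | gridObs n (S t x) = oi ∧ ∀ r : Fin k, gridObs n (S (t - 1 - r) x) = b r}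
          = volume.restrict bakerM
              ({x | gridObs n (S t x) = oi} ∩ {x | gridObs n (S (t + 1) x) = oj})
            / volume.restrict bakerM {x | gridObs n (S t x) = oi}) := by
  intro ε hε
  obtain ⟨n, hn⟩ : ∃ n : ℕ, Real.sqrt 2 / 2 ^ n < ε := by
    obtain ⟨n, hn⟩ := pow_unbounded_of_one_lt (Real.sqrt 2 / ε) (one_lt_two : (1 : ℝ) < 2)
    refine ⟨n, ?_⟩
    rw [div_lt_iff₀ hε] at hn
    rw [div_lt_iff₀ (by positivity)]
    linarith
  have hadd : ∀ (s t : ℤ) (p : ℝ × ℝ), (bakE ^ (s + t)) p = (bakE ^ s) ((bakE ^ t) p) := by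
    intro s t p
    rw [zpow_add, Equiv.Perm.mul_apply]
  have hZ : ∀ s : ℤ, Measurable (fun x => gridObs n ((bakE ^ s) x)) := fun s =>
    (meas_gridObs n).comp (mp_zpow s).measurable
  refine ⟨n, hn, fun m _ => dist_gridObs n m, fun t => ⇑(bakE ^ t), ?_, ?_, ?_, ?_, ?_, ?_⟩
  · intro p _; simp
  · intro p hp; simpa using bakE_apply hp
  · intro s t p _; exact hadd s t p
  · intro t p hp; exact (bakE_zpow_mem t p).2 hp
  · intro k t h A hA
    have hm : MeasurableSet {x | ∀ i, gridObs n ((bakE ^ t i) x) ∈ A i} := by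
      rw [setOf_forall]
      exact MeasurableSet.iInter fun i => hZ _ (hA i)
    rw [← (mp_zpow h).measure_preimage hm.nullMeasurableSet]
    congr 1
    ext x
    simp only [mem_setOf_eq, mem_preimage, hadd]
  · intro t k b oi oj hpos _
    have hmG : MeasurableSet {x | gridObs n x = oi} := meas_gridObs n (measurableSet_singleton oi)
    have hmF : MeasurableSet {x | gridObs n (bakE x) = oj} := by
      have := hZ 1 (measurableSet_singleton oj)
      rw [zpow_one] at this
      exact this
    have hmP : MeasurableSet {x | ∀ r : Fin k, gridObs n ((bakE ^ (-1 - (r : ℤ))) x) = b r} := by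
      rw [setOf_forall]
      exact MeasurableSet.iInter fun i => hZ _ (measurableSet_singleton (b i))
    have hmE : MeasurableSet {x | gridObs n x = oi ∧
        ∀ r : Fin k, gridObs n ((bakE ^ (-1 - (r : ℤ))) x) = b r} := hmG.inter hmP
    have q : ∀ r : ℕ, ∀ x, (bakE ^ (t - 1 - (r : ℤ))) x = (bakE ^ (-1 - (r : ℤ))) ((bakE ^ t) x) := by
      intro r x
      rw [← hadd]; congr 2; ring
    have q1 : ∀ x, (bakE ^ (t + 1)) x = bakE ((bakE ^ t) x) := by
      intro x
      rw [add_comm, hadd, zpow_one]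
    simp only [q, q1] at hpos ⊢
    have mz := markov_zero n k b oi oj (by
      rw [← (mp_zpow t).measure_preimage hmE.nullMeasurableSet]; exact hpos)
    rw [← (mp_zpow t).measure_preimage hmE.nullMeasurableSet,
      ← (mp_zpow t).measure_preimage hmG.nullMeasurableSet,
      ← (mp_zpow t).measure_preimage (hmE.inter hmF).nullMeasurableSet,
      ← (mp_zpow t).measure_preimage (hmG.inter hmF).nullMeasurableSet] at mz
    exact mz
end

section
/- If two Bernoulli shifts with probability vectors (p₁,...,pₙ) and (q₁,...,q_m) are isomorphic as measure-preserving systems, then they have the same Kolmogorov–Sinai entropy, i.e. Σᵢ −pᵢ log₂ pᵢ = Σⱼ −qⱼ log₂ qⱼ. -/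
open MeasureTheory Set
open scoped ENNReal

def IsIso {M Ω : Type*} [MeasurableSpace M] [MeasurableSpace Ω]
    (μ : Measure M) (ν : Measure Ω) (T : M → M) (S : Ω → Ω) (φ : M → Ω) : Prop :=
  ∃ (Mh : Set M) (Ωh : Set Ω), MeasurableSet Mh ∧ MeasurableSet Ωh ∧
    μ Mhᶜ = 0 ∧ ν Ωhᶜ = 0 ∧ Set.MapsTo T Mh Mh ∧ Set.MapsTo S Ωh Ωh ∧
    Set.BijOn φ Mh Ωh ∧
    (∀ A : Set M, MeasurableSet A → A ⊆ Mh → MeasurableSet (φ '' A) ∧ ν (φ '' A) = μ A) ∧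
    (∀ B : Set Ω, MeasurableSet B → B ⊆ Ωh → MeasurableSet (Mh ∩ φ ⁻¹' B)) ∧
    (∀ m ∈ Mh, φ (T m) = S (φ m))

lemma gibbs_fin {A B : Type*} [Fintype A] [Fintype B] (w : A → B → ℝ) (hw : ∀ x y, 0 ≤ w x y)
    (a : A → ℝ) (b : B → ℝ) (ha : ∀ x, a x = ∑ y, w x y) (hb : ∀ y, b y = ∑ x, w x y)
    (h1 : ∑ x, ∑ y, w x y = 1) (K : A → B → ℝ) (hK : ∀ x y, 0 < K x y)
    (hK1 : ∀ x, ∑ y, K x y ≤ 1) :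
    ∑ x, ∑ y, w x y * (Real.log (a x) + Real.log (K x y) - Real.log (b y)) ≤ 0 := by
  have key : ∀ x y, w x y * (Real.log (a x) + Real.log (K x y) - Real.log (b y))
      ≤ a x * K x y - w x y := by
    intro x y
    have hax : w x y ≤ a x := by
      rw [ha]; exact Finset.single_le_sum (f := fun y => w x y) (fun y _ => hw x y) (Finset.mem_univ y)
    have hby : w x y ≤ b y := by
      rw [hb]; exact Finset.single_le_sum (f := fun x => w x y) (fun x _ => hw x y) (Finset.mem_univ x)
    rcases (hw x y).eq_or_lt with h0 | h0
    · rw [← h0]; 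
      have := mul_nonneg ((hw x y).trans hax) (hK x y).le
      linarith
    · have ha0 : 0 < a x := h0.trans_le hax
      have hb0 : 0 < b y := h0.trans_le hby
      have hk0 := hK x y
      have e : Real.log (a x) + Real.log (K x y) - Real.log (b y)
          = Real.log (a x * K x y / b y) := by
        rw [Real.log_div (by positivity) (by positivity), Real.log_mul (by positivity) (by positivity)]
      rw [e]
      have h2 := Real.log_le_sub_one_of_pos (x := a x * K x y / b y) (by positivity)
      have h3 : w x y * (a x * K x y / b y) ≤ a x * K x y := by
        calc w x y * (a x * K x y / b y) ≤ b y * (a x * K x y / b y) := by gcongr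
          _ = a x * K x y := by field_simp
      nlinarith
  calc _ ≤ ∑ x, ∑ y, (a x * K x y - w x y) :=
        Finset.sum_le_sum fun x _ => Finset.sum_le_sum fun y _ => key x y
    _ = ∑ x, a x * ∑ y, K x y - 1 := by
        simp only [Finset.sum_sub_distrib, h1, Finset.mul_sum]
    _ ≤ ∑ x, a x * 1 - 1 := by
        gcongr with x
        · rw [ha]; exact Finset.sum_nonneg fun y _ => hw x y
        · exact hK1 x
    _ = 0 := by simp [ha, h1]

lemma integrable_fin {Ω A : Type*} [MeasurableSpace Ω] (μ : Measure Ω) [IsProbabilityMeasure μ]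
    [Finite A] [MeasurableSpace A] [MeasurableSingletonClass A] (X : Ω → A) (hX : Measurable X)
    (f : A → ℝ) : Integrable (fun ω => f (X ω)) μ := by
  have : IsProbabilityMeasure (μ.map X) := Measure.isProbabilityMeasure_map hX.aemeasurable
  exact (Integrable.of_finite (μ := μ.map X) (f := f)).comp_measurable hX

lemma integral_fin {Ω A : Type*} [MeasurableSpace Ω] (μ : Measure Ω) [IsProbabilityMeasure μ]
    [Fintype A] [MeasurableSpace A] [MeasurableSingletonClass A] (X : Ω → A) (hX : Measurable X)
    (f : A → ℝ) : ∫ ω, f (X ω) ∂μ = ∑ a, μ.real (X ⁻¹' {a}) * f a := by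
  have : IsProbabilityMeasure (μ.map X) := Measure.isProbabilityMeasure_map hX.aemeasurable
  rw [← integral_map (μ := μ) (f := f) hX.aemeasurable
    (measurable_of_finite f).aestronglyMeasurable, integral_fintype Integrable.of_finite]
  refine Finset.sum_congr rfl fun a _ => ?_
  rw [map_measureReal_apply hX (measurableSet_singleton a), smul_eq_mul]

lemma gibbs_meas {Ω A B : Type*} [MeasurableSpace Ω] (μ : Measure Ω) [IsProbabilityMeasure μ]
    [Fintype A] [MeasurableSpace A] [MeasurableSingletonClass A]
    [Fintype B] [MeasurableSpace B] [MeasurableSingletonClass B]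
    (X : Ω → A) (hX : Measurable X) (Y : Ω → B) (hY : Measurable Y)
    (K : A → B → ℝ) (hK : ∀ x y, 0 < K x y) (hK1 : ∀ x, ∑ y, K x y ≤ 1) :
    ∫ ω, Real.log (μ.real (X ⁻¹' {X ω})) ∂μ + ∫ ω, Real.log (K (X ω) (Y ω)) ∂μ
      ≤ ∫ ω, Real.log (μ.real (Y ⁻¹' {Y ω})) ∂μ := by
  have hXY : Measurable (fun ω => (X ω, Y ω)) := hX.prodMk hY
  have i1 := integrable_fin μ X hX (fun x => Real.log (μ.real (X ⁻¹' {x})))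
  have i2 := integrable_fin μ _ hXY (fun x => Real.log (K x.1 x.2))
  have i3 := integrable_fin μ Y hY (fun x => Real.log (μ.real (Y ⁻¹' {x})))
  rw [← sub_nonpos, ← integral_add i1 i2]
  have i12 := i1.add i2
  simp only [Pi.add_def] at i12
  rw [← integral_sub i12 i3]
  have e := integral_fin μ _ hXY (fun x => Real.log (μ.real (X ⁻¹' {x.1})) + Real.log (K x.1 x.2)
    - Real.log (μ.real (Y ⁻¹' {x.2})))
  have hone : ∑ z : A × B, μ.real ((fun ω => (X ω, Y ω)) ⁻¹' {z}) = 1 := by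
    have := integral_fin μ _ hXY (fun _ => (1:ℝ))
    simpa using this.symm
  have hmx : ∀ x, μ.real (X ⁻¹' {x}) = ∑ y, μ.real ((fun ω => (X ω, Y ω)) ⁻¹' {(x, y)}) := by
    intro x
    rw [← measureReal_biUnion_finset]
    · congr 1; ext ω; simp
    · intro y _ y' _ hyy
      refine Set.disjoint_left.2 fun ω h1 h2 => hyy ?_
      simp at h1 h2
      exact h1.2.symm.trans h2.2
    · intro y _; exact hXY (measurableSet_singleton _)
  have hmy : ∀ y, μ.real (Y ⁻¹' {y}) = ∑ x, μ.real ((fun ω => (X ω, Y ω)) ⁻¹' {(x, y)}) := by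
    intro x
    rw [← measureReal_biUnion_finset]
    · congr 1; ext ω; simp
    · intro y _ y' _ hyy
      refine Set.disjoint_left.2 fun ω h1 h2 => hyy ?_
      simp at h1 h2
      exact h1.1.symm.trans h2.1
    · intro y _; exact hXY (measurableSet_singleton _)
  refine le_trans (le_of_eq e) ?_
  rw [Fintype.sum_prod_type] at hone ⊢
  exact gibbs_fin (fun x y => μ.real ((fun ω => (X ω, Y ω)) ⁻¹' {(x, y)}))
    (fun _ _ => measureReal_nonneg) _ _ hmx hmy hone K hK hK1

/-- shift -/
def shiftBy {α : Type*} (i : ℤ) (ω : ℤ → α) : ℤ → α := fun t => ω (t + i)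

def IsBern {n : ℕ} (p : Fin n → ℝ≥0∞) (μ : Measure (ℤ → Fin n)) : Prop :=
  ∀ (F : Finset ℤ) (a : ℤ → Fin n), μ {ω | ∀ i ∈ F, ω i = a i} = ∏ i ∈ F, p (a i)

lemma measurable_shiftBy {n : ℕ} (i : ℤ) : Measurable (shiftBy i : (ℤ → Fin n) → _) :=
  measurable_pi_lambda _ fun t => measurable_pi_apply (t + i)

lemma IsBern.restrict {n : ℕ} {p : Fin n → ℝ≥0∞} {μ : Measure (ℤ → Fin n)} (h : IsBern p μ)
    (hn : 0 < n) (F : Finset ℤ) (x : F → Fin n) :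
    μ (F.restrict ⁻¹' {x}) = ∏ i : F, p (x i) := by
  classical
  have := h F (fun t => if h : t ∈ F then x ⟨t, h⟩ else ⟨0, hn⟩)
  rw [← Finset.prod_coe_sort] at this
  convert this using 2
  · ext ω
    simp only [mem_preimage, mem_singleton_iff, funext_iff, mem_ofPred_eq, Finset.restrict]
    constructor
    · intro h i hi; simp [hi, ← h ⟨i, hi⟩]
    · rintro h ⟨i, hi⟩; simp [h i hi, hi]
  · simp

lemma IsBern.mp {n : ℕ} {p : Fin n → ℝ≥0∞} {μ : Measure (ℤ → Fin n)} [IsProbabilityMeasure μ]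
    (h : IsBern p μ) (hn : 0 < n) (i : ℤ) : MeasurePreserving (shiftBy i) μ μ := by
  refine ⟨measurable_shiftBy i, ?_⟩
  have := Measure.isProbabilityMeasure_map (μ := μ) (measurable_shiftBy i).aemeasurable
  refine IsProjectiveLimit.unique (P := fun F => μ.map F.restrict) ?_ (fun F => rfl)
  intro F
  refine Measure.ext_of_singleton fun x => ?_
  rw [Measure.map_apply (Finset.measurable_restrict F) (measurableSet_singleton x),
    Measure.map_apply (Finset.measurable_restrict F) (measurableSet_singleton x),
    h.restrict hn,
    Measure.map_apply (measurable_shiftBy i)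
      (Finset.measurable_restrict F (measurableSet_singleton x))]
  classical
  obtain ⟨e, he⟩ : ∃ e : ℤ → Fin n, ∀ j : F, e j = x j :=
    ⟨fun t => if h : t ∈ F then x ⟨t, h⟩ else ⟨0, hn⟩, fun j => by simp⟩
  have := h (F.map (addRightEmbedding i)) (fun t => e (t - i))
  rw [Finset.prod_map, ← Finset.prod_coe_sort] at this
  convert this using 2
  · ext ω
    simp only [mem_preimage, mem_singleton_iff, funext_iff, mem_ofPred_eq, Finset.restrict, shiftBy]
    constructor
    · intro h j hj
      simp at hj
      obtain ⟨a, ha, rfl⟩ := hj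
      rw [add_sub_cancel_right, he ⟨a, ha⟩, ← h ⟨a, ha⟩]
    · rintro h ⟨j, hj⟩
      rw [h (j + i) (by simpa using hj), add_sub_cancel_right, he ⟨j, hj⟩]
  · simp [he]

lemma approx_cyl {n m : ℕ} (hm : 0 < m) (μ : Measure (ℤ → Fin n)) [IsProbabilityMeasure μ]
    (Y : (ℤ → Fin n) → Fin m) (hY : Measurable Y) (δ : ℝ) (hδ : 0 < δ) :
    ∃ (k : ℕ) (G : (ℤ → Fin n) → Fin m), Measurable G ∧
      (∀ ω ω', (∀ t : ℤ, -k ≤ t → t < k → ω t = ω' t) → G ω = G ω') ∧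
      μ.real {ω | Y ω ≠ G ω} ≤ δ := by
  classical
  have halg : IsSetAlgebra (measurableCylinders (fun _ : ℤ => Fin n)) :=
    ⟨empty_mem_measurableCylinders _, fun s hs => compl_mem_measurableCylinders hs,
      fun s t hs ht => union_mem_measurableCylinders hs ht⟩
  have hd := Measure.MeasureDense.of_generateFrom_isSetAlgebra_finite μ halg
    generateFrom_measurableCylinders.symm
  have hmR : (0:ℝ) < m := by exact_mod_cast hm
  choose C hC hCμ using fun j : Fin m => hd.approx (Y ⁻¹' {j}) (hY (measurableSet_singleton j))
    (measure_ne_top _ _) (δ / m) (by positivity)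
  choose F S hS hCS using fun j => (mem_measurableCylinders _).1 (hC j)
  obtain ⟨k, hk⟩ : ∃ k : ℕ, ∀ j, ∀ t ∈ F j, -(k:ℤ) ≤ t ∧ t < k := by
    refine ⟨((Finset.univ.biUnion F).sup Int.natAbs) + 1, fun j t ht => ?_⟩
    have : t.natAbs ≤ (Finset.univ.biUnion F).sup Int.natAbs :=
      Finset.le_sup (f := Int.natAbs) (by simp; exact ⟨j, ht⟩)
    push_cast
    omega
  have hCm : ∀ j, MeasurableSet (C j) := fun j => 
    MeasurableSet.of_mem_measurableCylinders (hC j)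
  have hCd : ∀ j, ∀ ω ω', (∀ t : ℤ, -k ≤ t → t < k → ω t = ω' t) → (ω ∈ C j ↔ ω' ∈ C j) := by
    intro j ω ω' h
    rw [hCS j, mem_cylinder, mem_cylinder]
    have : (F j).restrict ω = (F j).restrict ω' := by
      funext t; exact h t (hk j t t.2).1 (hk j t t.2).2
    rw [this]
  let D : (ℤ → Fin n) → (Fin m → Prop) := fun ω j => ω ∈ C j
  let c : (Fin m → Prop) → Fin m := fun P => if h : ∃ j, P j then h.choose else ⟨0, hm⟩
  have hDm : Measurable D := measurable_pi_lambda _ fun j => (measurableSet_setOfPred.1 (hCm j))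
  refine ⟨k, fun ω => c (D ω), (measurable_of_finite c).comp hDm, ?_, ?_⟩
  · intro ω ω' h
    have : D ω = D ω' := by funext j; exact propext (hCd j ω ω' h)
    simp only [this]
  · have hsub : {ω | Y ω ≠ c (D ω)} ⊆ ⋃ j ∈ (Finset.univ : Finset (Fin m)), symmDiff (Y ⁻¹' {j}) (C j) := by
      intro ω hω
      by_contra hcon
      simp only [mem_iUnion, not_exists, Finset.mem_univ, forall_const, Set.mem_symmDiff] at hcon
      have hiff : ∀ j, Y ω = j ↔ ω ∈ C j := by
        intro j
        have := hcon j
        simp only [mem_preimage, mem_singleton_iff] at this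
        tauto
      have hex : ∃ j, D ω j := ⟨Y ω, (hiff _).1 rfl⟩
      apply hω
      have : c (D ω) = hex.choose := dif_pos hex
      rw [this]
      exact (hiff _).2 hex.choose_spec
    calc μ.real {ω | Y ω ≠ c (D ω)} ≤ _ := measureReal_mono hsub (measure_ne_top _ _)
      _ ≤ ∑ j, μ.real (symmDiff (Y ⁻¹' {j}) (C j)) := measureReal_biUnion_finset_le _ _
      _ ≤ ∑ j : Fin m, δ / m := by
          refine Finset.sum_le_sum fun j _ => ?_
          exact (ENNReal.toReal_le_of_le_ofReal (by positivity) (hCμ j).le)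
      _ = δ := by simp; field_simp

/-- negative entropy (natural logarithm) -/
noncomputable def negEnt {n : ℕ} (p : Fin n → ℝ≥0∞) : ℝ :=
  ∑ i, (p i).toReal * Real.log (p i).toReal

lemma IsBern.single {n : ℕ} {p : Fin n → ℝ≥0∞} {μ : Measure (ℤ → Fin n)} (h : IsBern p μ)
    (i : ℤ) (a : Fin n) : μ ((fun ω => ω i) ⁻¹' {a}) = p a := by
  have := h {i} (fun _ => a)
  simpa [Set.preimage, Set.ofPred] using this

lemma IsBern.int_log {n : ℕ} {p : Fin n → ℝ≥0∞} {μ : Measure (ℤ → Fin n)}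
    [IsProbabilityMeasure μ] (h : IsBern p μ) (hn : 0 < n) (W : Finset ℤ) :
    ∫ ω, Real.log (μ.real (W.restrict ⁻¹' {W.restrict ω})) ∂μ = W.card * negEnt p := by
  have hae : ∀ᵐ ω ∂μ, ∀ i : ℤ, p (ω i) ≠ 0 := by
    rw [ae_all_iff]
    intro i
    have h0 : μ ((fun ω => ω i) ⁻¹' {a | p a = 0}) = 0 := by
      have : ((fun ω : ℤ → Fin n => ω i) ⁻¹' {a | p a = 0})
          = ⋃ a ∈ {a | p a = 0}, (fun ω : ℤ → Fin n => ω i) ⁻¹' {a} := by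
        ext ω; simp
      rw [this, measure_biUnion_null_iff (Set.to_countable _)]
      intro a ha
      rw [h.single]; exact ha
    filter_upwards [measure_eq_zero_iff_ae_notMem.1 h0] with ω hω
    exact hω
  have hfin : ∀ a, p a ≠ ∞ := fun a => by rw [← h.single 0 a]; exact measure_ne_top _ _
  have e1 : ∀ᵐ (ω : ℤ → Fin n) ∂μ, Real.log (μ.real ((W.restrict : (ℤ → Fin n) → (W → Fin n)) ⁻¹' {(W.restrict ω : W → Fin n)}))
      = ∑ i ∈ W, Real.log (p (ω i)).toReal := by
    filter_upwards [hae] with ω hω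
    rw [measureReal_def, h.restrict hn, ENNReal.toReal_prod, Real.log_prod]
    · simp only [Finset.restrict]
      exact Finset.sum_coe_sort W (fun i => Real.log (p (ω i)).toReal)
    · intro i _
      exact ENNReal.toReal_ne_zero.2 ⟨hω i, hfin _⟩
  rw [integral_congr_ae e1, integral_finsetSum]
  · have : ∀ i ∈ W, ∫ ω, Real.log (p (ω i)).toReal ∂μ = negEnt p := by
      intro i _
      rw [integral_fin μ (fun ω => ω i) (measurable_pi_apply i) (fun a => Real.log (p a).toReal)]
      simp only [measureReal_def, h.single, negEnt]
    rw [Finset.sum_congr rfl this]; simp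
  · intro i _
    exact integrable_fin μ (fun ω => ω i) (measurable_pi_apply i) (fun a => Real.log (p a).toReal)

lemma factor_step {n m : ℕ} (hn : 0 < n) (hm : 0 < m) {p : Fin n → ℝ≥0∞} {q : Fin m → ℝ≥0∞}
    {μ : Measure (ℤ → Fin n)} [IsProbabilityMeasure μ]
    {ν : Measure (ℤ → Fin m)} [IsProbabilityMeasure ν]
    (hμ : IsBern p μ) (hν : IsBern q ν) (φ : (ℤ → Fin n) → (ℤ → Fin m))
    (hφ : MeasurePreserving φ μ ν)
    (hc : ∀ᵐ ω ∂μ, ∀ i : ℕ, φ ω i = φ (shiftBy i ω) 0)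
    (k : ℕ) (G : (ℤ → Fin n) → Fin m) (hG : Measurable G)
    (hGd : ∀ ω ω', (∀ t : ℤ, -k ≤ t → t < k → ω t = ω' t) → G ω = G ω')
    (κ : Fin m → Fin m → ℝ) (hκ : ∀ y z, 0 < κ y z) (hκ1 : ∀ z, ∑ y, κ y z = 1) (N : ℕ) :
    (N + 2 * k : ℝ) * negEnt p + N * ∫ ω, Real.log (κ (φ ω 0) (G ω)) ∂μ ≤ N * negEnt q := by
  classical
  let W : Finset ℤ := Finset.Ico (-k : ℤ) (N + k)
  let V : Finset ℤ := Finset.Ico (0 : ℤ) N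
  have hW : (W.card : ℝ) = N + 2 * k := by
    have : W.card = N + 2 * k := by simp only [W, Int.card_Ico]; omega
    rw [this]; push_cast; ring
  have hV : (V.card : ℝ) = N := by simp [V]
  let ext : (W → Fin n) → (ℤ → Fin n) := fun x t => if h : t ∈ W then x ⟨t, h⟩ else ⟨0, hn⟩
  let K : (W → Fin n) → (V → Fin m) → ℝ := fun x y => ∏ i : V, κ (y i) (G (shiftBy i (ext x)))
  have hK : ∀ x y, 0 < K x y := fun x y => Finset.prod_pos fun i _ => hκ _ _
  have hK1 : ∀ x, ∑ y, K x y ≤ 1 := by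
    intro x
    have := Finset.prod_univ_sum (fun _ : V => (Finset.univ : Finset (Fin m)))
      (fun i y => κ y (G (shiftBy i (ext x))))
    simp only [hκ1, Finset.prod_const_one, Fintype.piFinset_univ] at this
    exact this.symm.le
  have hXm : Measurable (W.restrict : (ℤ → Fin n) → _) := Finset.measurable_restrict W
  have hVm : Measurable (V.restrict : (ℤ → Fin m) → _) := Finset.measurable_restrict V
  have main := gibbs_meas μ (W.restrict) hXm (fun ω => V.restrict (φ ω))
    (hVm.comp hφ.measurable) K hK hK1
  rw [hμ.int_log hn W, hW] at main
  have hYm : ∀ y, μ.real ((fun ω => V.restrict (φ ω)) ⁻¹' {y}) = ν.real (V.restrict ⁻¹' {y}) := by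
    intro y
    rw [← hφ.map_eq, map_measureReal_apply hφ.measurable (hVm (measurableSet_singleton y))]
    rfl
  have e3 : ∫ ω, Real.log (μ.real ((fun ω => V.restrict (φ ω)) ⁻¹' {V.restrict (φ ω)})) ∂μ
      = N * negEnt q := by
    simp only [hYm]
    rw [← hV, ← hν.int_log hm V]
    conv_rhs => rw [← hφ.map_eq]
    rw [hφ.map_eq, ← hφ.map_eq]
    rw [integral_map (f := fun y => Real.log ((μ.map φ).real (V.restrict ⁻¹' {V.restrict y})))
      hφ.measurable.aemeasurable]
    exact ((measurable_of_finite (fun z => Real.log ((μ.map φ).real (V.restrict ⁻¹' {z})))).comp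
      hVm).aestronglyMeasurable
  rw [e3] at main
  have hLm : Measurable (fun ω => (φ ω 0, G ω)) :=
    ((measurable_pi_apply 0).comp hφ.measurable).prodMk hG
  let L : (ℤ → Fin n) → ℝ := fun ω => Real.log (κ (φ ω 0) (G ω))
  have hLm' : Measurable L := (measurable_of_finite (fun z : Fin m × Fin m => Real.log (κ z.1 z.2))).comp hLm
  have hLi : Integrable L μ := integrable_fin μ _ hLm (fun z => Real.log (κ z.1 z.2))
  have e2 : ∀ᵐ ω ∂μ, Real.log (K (W.restrict ω) (V.restrict (φ ω)))
      = ∑ i ∈ V, L (shiftBy i ω) := by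
    filter_upwards [hc] with ω hω
    rw [Real.log_prod (fun i _ => (hκ _ _).ne'), ← Finset.sum_coe_sort V]
    refine Finset.sum_congr rfl fun i _ => ?_
    have hi := i.2
    simp only [V, Finset.mem_Ico] at hi
    have h1 : G (shiftBy i (ext (W.restrict ω))) = G (shiftBy i ω) := by
      apply hGd
      intro t h1 h2
      have : t + (i : ℤ) ∈ W := by simp only [W, Finset.mem_Ico]; omega
      simp only [shiftBy, ext, this, dif_pos, Finset.restrict]
    have h2 : φ ω i = φ (shiftBy i ω) 0 := by
      have := hω (i : ℤ).toNat
      rwa [Int.toNat_of_nonneg hi.1] at this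
    simp only [L, h1, ← h2, Finset.restrict]
  have e4 : ∫ ω, Real.log (K (W.restrict ω) (V.restrict (φ ω))) ∂μ = N * ∫ ω, L ω ∂μ := by
    rw [integral_congr_ae e2, integral_finsetSum]
    · have : ∀ i ∈ V, ∫ ω, L (shiftBy i ω) ∂μ = ∫ ω, L ω ∂μ := by
        intro i _
        have hs := hμ.mp hn i
        rw [← integral_map (f := L) hs.measurable.aemeasurable hLm'.aestronglyMeasurable, hs.map_eq]
      rw [Finset.sum_congr rfl this, Finset.sum_const, nsmul_eq_mul, hV]
    · intro i _
      exact (hμ.mp hn i).integrable_comp_of_integrable hLi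
  rw [e4] at main
  exact main

lemma factor_le {n m : ℕ} (hn : 0 < n) (hm : 0 < m) {p : Fin n → ℝ≥0∞} {q : Fin m → ℝ≥0∞}
    {μ : Measure (ℤ → Fin n)} [IsProbabilityMeasure μ]
    {ν : Measure (ℤ → Fin m)} [IsProbabilityMeasure ν]
    (hμ : IsBern p μ) (hν : IsBern q ν) (φ : (ℤ → Fin n) → (ℤ → Fin m))
    (hφ : MeasurePreserving φ μ ν)
    (hc : ∀ᵐ ω ∂μ, φ (shiftBy 1 ω) = shiftBy 1 (φ ω)) :
    negEnt p ≤ negEnt q := by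
  have hc' : ∀ᵐ ω ∂μ, ∀ i : ℕ, φ ω i = φ (shiftBy i ω) 0 := by
    have h1 : ∀ᵐ ω ∂μ, ∀ i : ℕ, φ (shiftBy 1 (shiftBy i ω)) = shiftBy 1 (φ (shiftBy i ω)) := by
      rw [ae_all_iff]
      intro i
      exact (hμ.mp hn i).quasiMeasurePreserving.ae hc
    filter_upwards [h1] with ω hω i
    have : ∀ i : ℕ, φ (shiftBy i ω) = shiftBy i (φ ω) := by
      intro i
      induction i with
      | zero =>
        have e : ∀ {r : ℕ} (x : ℤ → Fin r), shiftBy ((0 : ℕ) : ℤ) x = x := by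
          intro r x; funext t; simp [shiftBy]
        rw [e, e]
      | succ j ih =>
        have e : ∀ {r : ℕ} (x : ℤ → Fin r), shiftBy ((j + 1 : ℕ) : ℤ) x = shiftBy 1 (shiftBy j x) := by
          intro r x; funext t; simp only [shiftBy]; congr 1; push_cast; ring
        rw [e, e, hω j, ih]
    rw [this i]; simp [shiftBy]
  refine le_of_forall_pos_le_add fun η hη => ?_
  -- choose ε
  have hmR : (0:ℝ) < m := by exact_mod_cast hm
  let ε : ℝ := 1 - Real.exp (-(η / 2))
  have hε1 : 1 - ε = Real.exp (-(η / 2)) := by simp [ε]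
  have hε0 : 0 < ε := by
    have : Real.exp (-(η / 2)) < 1 := by
      rw [← Real.exp_zero]; exact Real.exp_lt_exp.2 (by linarith)
    simp only [ε]; linarith
  have hεpos : 0 < 1 - ε := by rw [hε1]; positivity
  let l : ℝ := |Real.log (ε / m)|
  have hl : 0 ≤ l := abs_nonneg _
  obtain ⟨k, G, hG, hGd, hGμ⟩ := approx_cyl hm μ (fun ω => φ ω 0)
    ((measurable_pi_apply 0).comp hφ.measurable) (η / 2 / (l + 1)) (by positivity)
  let κ : Fin m → Fin m → ℝ := fun y z => (if y = z then 1 - ε else 0) + ε / m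
  have hκ : ∀ y z, 0 < κ y z := by
    intro y z; simp only [κ]; split_ifs <;> positivity
  have hκ1 : ∀ z, ∑ y, κ y z = 1 := by
    intro z
    simp only [κ, Finset.sum_add_distrib, Finset.sum_ite_eq', Finset.mem_univ, if_true,
      Finset.sum_const, Finset.card_univ, Fintype.card_fin, nsmul_eq_mul]
    field_simp; ring
  have hLm : Measurable (fun ω => (φ ω 0, G ω)) :=
    ((measurable_pi_apply 0).comp hφ.measurable).prodMk hG
  have hLi : Integrable (fun ω => Real.log (κ (φ ω 0) (G ω))) μ :=
    integrable_fin μ _ hLm (fun z => Real.log (κ z.1 z.2))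
  have hne : MeasurableSet {ω | φ ω 0 ≠ G ω} :=
    hLm (Set.toFinite {z : Fin m × Fin m | z.1 ≠ z.2}).measurableSet
  have hint : -η ≤ ∫ ω, Real.log (κ (φ ω 0) (G ω)) ∂μ := by
    have hlow : ∀ ω, -(η / 2) + {ω | φ ω 0 ≠ G ω}.indicator (fun _ => -l) ω
        ≤ Real.log (κ (φ ω 0) (G ω)) := by
      intro ω
      by_cases h : φ ω 0 = G ω
      · have : Real.log (1 - ε) ≤ Real.log (κ (φ ω 0) (G ω)) := by
          apply Real.log_le_log hεpos
          simp only [κ, h, if_true]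
          have : 0 < ε / m := by positivity
          linarith
        rw [hε1, Real.log_exp] at this
        simpa [Set.indicator, h] using this
      · have h1 : -l ≤ Real.log (ε / m) := neg_abs_le _
        have h2 : κ (φ ω 0) (G ω) = ε / m := by simp [κ, h]
        rw [h2, Set.indicator_of_mem (by exact h)]
        linarith
    have hI : Integrable ({ω | φ ω 0 ≠ G ω}.indicator (fun _ => -l)) μ :=
      (integrable_const (-l)).indicator hne
    have := integral_mono ((integrable_const (-(η / 2))).add hI) hLi hlow
    simp only [Pi.add_apply] at this
    rw [integral_add (integrable_const _) hI, integral_indicator_const _ hne] at this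
    simp at this
    have hb : μ.real {ω | φ ω 0 ≠ G ω} * l ≤ η / 2 := by
      calc _ ≤ (η / 2 / (l + 1)) * l := by gcongr
        _ = η / 2 * (l / (l + 1)) := by ring
        _ ≤ η / 2 * 1 := by gcongr; rw [div_le_one (by positivity)]; linarith
        _ = η / 2 := mul_one _
    simp only [ne_eq] at hb
    linarith
  have step := factor_step hn hm hμ hν φ hφ hc' k G hG hGd κ hκ hκ1
  by_contra hcon
  push Not at hcon
  set c := ∫ ω, Real.log (κ (φ ω 0) (G ω)) ∂μ
  have hpos : 0 < negEnt p + c - negEnt q := by linarith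
  obtain ⟨N, hN⟩ := exists_nat_gt ((-(2 * k * negEnt p)) / (negEnt p + c - negEnt q))
  rw [div_lt_iff₀ hpos] at hN
  have := step N
  nlinarith

theorem iso_factors {n m : ℕ} (hn : 0 < n) (hm : 0 < m) 
    (μ : Measure (ℤ → Fin n)) (ν : Measure (ℤ → Fin m)) 
    (φ : (ℤ → Fin n) → (ℤ → Fin m))
    (hiso : IsIso μ ν (fun ω t => ω (t + 1)) (fun ω t => ω (t + 1)) φ) :
    (∃ f, MeasurePreserving f μ ν ∧ ∀ᵐ ω ∂μ, f (shiftBy 1 ω) = shiftBy 1 (f ω)) ∧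
    (∃ g, MeasurePreserving g ν μ ∧ ∀ᵐ ω ∂ν, g (shiftBy 1 ω) = shiftBy 1 (g ω)) := by
  classical
  obtain ⟨A, B, hA, hB, hA0, hB0, hTA, hSB, hbij, him, hpre, hcomm⟩ := hiso
  have hAae : ∀ᵐ ω ∂μ, ω ∈ A := mem_ae_iff.2 hA0
  have hBae : ∀ᵐ ω ∂ν, ω ∈ B := mem_ae_iff.2 hB0
  have : Nonempty (ℤ → Fin n) := ⟨fun _ => ⟨0, hn⟩⟩
  constructor
  · let f : (ℤ → Fin n) → (ℤ → Fin m) := A.piecewise φ (fun _ _ => ⟨0, hm⟩)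
    have key : ∀ C : Set (ℤ → Fin m), A ∩ f ⁻¹' C = A ∩ φ ⁻¹' (C ∩ B) := by
      intro C; ext ω
      by_cases h : ω ∈ A
      · have := hbij.mapsTo h
        simp [f, h, this]
      · simp [h]
    have hfm : Measurable f := by
      intro C hC
      have e : f ⁻¹' C = (A ∩ f ⁻¹' C) ∪ (Aᶜ ∩ f ⁻¹' C) := by
        rw [← Set.union_inter_distrib_right]; simp
      rw [e, key]
      refine (hpre _ (hC.inter hB) inter_subset_right).union ?_
      by_cases h0 : (fun _ => ⟨0, hm⟩ : ℤ → Fin m) ∈ C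
      · convert hA.compl using 1
        ext ω
        by_cases h : ω ∈ A <;> simp [f, h, h0]
      · convert MeasurableSet.empty using 1
        ext ω
        by_cases h : ω ∈ A <;> simp [f, h, h0]
    refine ⟨f, ⟨hfm, ?_⟩, ?_⟩
    · ext C hC
      rw [Measure.map_apply hfm hC]
      have h1 : μ (f ⁻¹' C) = μ (A ∩ f ⁻¹' C) := by
        apply measure_congr
        filter_upwards [hAae] with ω hω
        apply propext
        exact ⟨fun h => ⟨hω, h⟩, fun h => h.2⟩
      have h2 : ν C = ν (C ∩ B) := by
        apply measure_congr
        filter_upwards [hBae] with ω hω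
        apply propext
        exact ⟨fun h => ⟨h, hω⟩, fun h => h.1⟩
      have h3 : φ '' (A ∩ φ ⁻¹' (C ∩ B)) = C ∩ B := by
        ext y; constructor
        · rintro ⟨x, hx, rfl⟩; exact hx.2
        · intro hy
          obtain ⟨x, hx, rfl⟩ := hbij.surjOn hy.2
          exact ⟨x, ⟨hx, hy⟩, rfl⟩
      rw [h1, key, h2, ← (him _ (hpre _ (hC.inter hB) inter_subset_right) inter_subset_left).2, h3]
    · filter_upwards [hAae] with ω hω
      have h1 : shiftBy 1 ω ∈ A := hTA hω
      have h2 := hcomm ω hω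
      simp only [f, Set.piecewise_eq_of_mem _ _ _ h1, Set.piecewise_eq_of_mem _ _ _ hω]
      exact h2
  · let ψ := Function.invFunOn φ A
    have hψA : ∀ y ∈ B, ψ y ∈ A := fun y hy => Function.invFunOn_mem (hbij.surjOn hy)
    have hψ : ∀ y ∈ B, φ (ψ y) = y := fun y hy => Function.invFunOn_eq (hbij.surjOn hy)
    let g : (ℤ → Fin m) → (ℤ → Fin n) := B.piecewise ψ (fun _ _ => ⟨0, hn⟩)
    have key : ∀ C : Set (ℤ → Fin n), B ∩ g ⁻¹' C = φ '' (C ∩ A) := by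
      intro C; ext y
      constructor
      · rintro ⟨h, h'⟩
        simp only [mem_preimage, g, Set.piecewise_eq_of_mem _ _ _ h] at h'
        exact ⟨ψ y, ⟨h', hψA y h⟩, hψ y h⟩
      · rintro ⟨x, hx, rfl⟩
        have h := hbij.mapsTo hx.2
        refine ⟨h, ?_⟩
        simp only [mem_preimage, g, Set.piecewise_eq_of_mem _ _ _ h]
        rw [hbij.injOn (hψA _ h) hx.2 (hψ _ h)]
        exact hx.1
    have hgm : Measurable g := by
      intro C hC
      have e : g ⁻¹' C = (B ∩ g ⁻¹' C) ∪ (Bᶜ ∩ g ⁻¹' C) := by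
        rw [← Set.union_inter_distrib_right]; simp
      rw [e, key]
      refine (him _ (hC.inter hA) inter_subset_right).1.union ?_
      by_cases h0 : (fun _ => ⟨0, hn⟩ : ℤ → Fin n) ∈ C
      · convert hB.compl using 1
        ext ω
        by_cases h : ω ∈ B <;> simp [g, h, h0]
      · convert MeasurableSet.empty using 1
        ext ω
        by_cases h : ω ∈ B <;> simp [g, h, h0]
    refine ⟨g, ⟨hgm, ?_⟩, ?_⟩
    · ext C hC
      rw [Measure.map_apply hgm hC]
      have h1 : ν (g ⁻¹' C) = ν (B ∩ g ⁻¹' C) := by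
        apply measure_congr
        filter_upwards [hBae] with ω hω
        apply propext
        exact ⟨fun h => ⟨hω, h⟩, fun h => h.2⟩
      have h2 : μ C = μ (C ∩ A) := by
        apply measure_congr
        filter_upwards [hAae] with ω hω
        apply propext
        exact ⟨fun h => ⟨h, hω⟩, fun h => h.1⟩
      rw [h1, key, h2, (him _ (hC.inter hA) inter_subset_right).2]
    · filter_upwards [hBae] with y hy
      have h1 : shiftBy 1 y ∈ B := hSB hy
      simp only [g, Set.piecewise_eq_of_mem _ _ _ h1, Set.piecewise_eq_of_mem _ _ _ hy]
      have h2 := hcomm (ψ y) (hψA y hy)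
      rw [hψ y hy] at h2
      have h3 : shiftBy 1 (ψ y) ∈ A := hTA (hψA y hy)
      refine hbij.injOn (hψA _ h1) h3 ?_
      rw [hψ _ h1]
      exact h2.symm

/-- If two Bernoulli shifts are isomorphic, their Kolmogorov–Sinai entropies
`Σᵢ −pᵢ log₂ pᵢ` and `Σⱼ −qⱼ log₂ qⱼ` are equal. -/
theorem stmt17 (n m : ℕ) (hn : 0 < n) (hm : 0 < m)
    (p : Fin n → ℝ≥0∞) (q : Fin m → ℝ≥0∞) (hp : ∑ i, p i = 1) (hq : ∑ j, q j = 1)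
    (μ : Measure (ℤ → Fin n)) [IsProbabilityMeasure μ]
    (ν : Measure (ℤ → Fin m)) [IsProbabilityMeasure ν]
    (hμ : ∀ (F : Finset ℤ) (a : ℤ → Fin n),
      μ {ω | ∀ i ∈ F, ω i = a i} = ∏ i ∈ F, p (a i))
    (hν : ∀ (F : Finset ℤ) (a : ℤ → Fin m),
      ν {ω | ∀ i ∈ F, ω i = a i} = ∏ i ∈ F, q (a i))
    (φ : (ℤ → Fin n) → (ℤ → Fin m))
    (hiso : IsIso μ ν (fun ω t => ω (t + 1)) (fun ω t => ω (t + 1)) φ) :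
    ∑ i, -((p i).toReal * Real.logb 2 (p i).toReal)
      = ∑ j, -((q j).toReal * Real.logb 2 (q j).toReal) := by
  obtain ⟨⟨f, hf, hfc⟩, g, hg, hgc⟩ := iso_factors hn hm μ ν φ hiso
  have h1 : negEnt p ≤ negEnt q := factor_le hn hm hμ hν f hf hfc
  have h2 : negEnt q ≤ negEnt p := factor_le hm hn hν hμ g hg hgc
  have h3 := le_antisymm h1 h2
  have e : ∀ {r : ℕ} (s : Fin r → ℝ≥0∞), ∑ i, -((s i).toReal * Real.logb 2 (s i).toReal)
      = -(negEnt s / Real.log 2) := by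
    intro r s
    simp only [negEnt, Real.logb, Finset.sum_neg_distrib, Finset.sum_div, mul_div_assoc]
  rw [e, e, h3]
end
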